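/- Let $k$ be a field of characteristic not equal to $2$, let $V$ be a finite-dimensional $k$-vector space, and let $c : V \to V$ be a linear involution ($c^2 = \mathrm{id}$) that is neither $\mathrm{id}$ nor $-\mathrm{id}$. Then the ratio $\dim (\mathrm{Sym}^n V)^{c=1} / \dim \mathrm{Sym}^n V$ of the dimension of the $+1$-eigenspace of the induced involution on the $n$-th symmetric power to the dimension of the $n$-th symmetric power tends to $1/2$ as $n \to \infty$. -/

import Mathlib

open scoped TensorProduct

section SymPow

variable (k : Type*) [Field k] (V : Type*) [AddCommGroup V] [Module k V]

/-- The submodule of relations defining the `n`-th symmetric power as a quotient of the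
`n`-th tensor power. -/
noncomputable def symRel (n : ℕ) : Submodule k (⨂[k]^n V) :=
  Submodule.span k {x | ∃ (σ : Equiv.Perm (Fin n)) (v : Fin n → V),
    x = PiTensorProduct.tprod k v - PiTensorProduct.tprod k (v ∘ σ)}

/-- The `n`-th symmetric power `Symⁿ V`, as the quotient of the `n`-th tensor power by
the permutation relations. -/
noncomputable def SymPow (n : ℕ) : Type _ := (⨂[k]^n V) ⧸ symRel k V n

noncomputable instance (n : ℕ) : AddCommGroup (SymPow k V n) :=
  inferInstanceAs (AddCommGroup ((⨂[k]^n V) ⧸ symRel k V n))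

noncomputable instance (n : ℕ) : Module k (SymPow k V n) :=
  inferInstanceAs (Module k ((⨂[k]^n V) ⧸ symRel k V n))

theorem symRel_le_comap (n : ℕ) (c : V →ₗ[k] V) :
    symRel k V n ≤ Submodule.comap
      (PiTensorProduct.map (fun _ : Fin n => c)) (symRel k V n) := by
  rw [symRel, Submodule.span_le]
  rintro x ⟨σ, v, rfl⟩
  rw [SetLike.mem_coe, Submodule.mem_comap, map_sub, PiTensorProduct.map_tprod,
    PiTensorProduct.map_tprod]
  exact Submodule.subset_span ⟨σ, fun i => c (v i), rfl⟩

/-- The map functorially induced on the `n`-th symmetric power by a linear map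
`c : V →ₗ[k] V`. -/
noncomputable def symPowMap (n : ℕ) (c : V →ₗ[k] V) : SymPow k V n →ₗ[k] SymPow k V n :=
  Submodule.mapQ (symRel k V n) (symRel k V n)
    (PiTensorProduct.map (fun _ : Fin n => c)) (symRel_le_comap k V n c)

end SymPow

open Module

/-- Two families with the same multiset of values differ by a permutation of the indices. -/
theorem exists_perm_of_map_univ_eq {α ι : Type*} [Fintype α] {f g : α → ι}
    (h : Multiset.map f Finset.univ.val = Multiset.map g Finset.univ.val) :
    ∃ σ : Equiv.Perm α, f = g ∘ σ := by
  classical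
  have key (c : ι) : Nonempty ({a // f a = c} ≃ {a // g a = c}) := by
    rw [← Fintype.card_eq, Fintype.card_subtype, Fintype.card_subtype]
    have hc := congrArg (Multiset.count c) h
    rw [Multiset.count_map, Multiset.count_map] at hc
    simpa only [Finset.card_def, Finset.filter_val, eq_comm] using hc
  refine ⟨Equiv.ofFiberEquiv fun c => (key c).some, ?_⟩
  ext a
  exact (Equiv.ofFiberEquiv_map _ a).symm

theorem monomial_toFinsupp {R ι : Type*} [CommSemiring R] [DecidableEq ι] (s : Multiset ι) :
    MvPolynomial.monomial s.toFinsupp (1 : R) = (s.map MvPolynomial.X).prod := by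
  induction s using Multiset.induction with
  | empty => simp
  | cons a s ih =>
    rw [Multiset.map_cons, Multiset.prod_cons, ← ih, ← Multiset.singleton_add, map_add,
      Multiset.toFinsupp_singleton, MvPolynomial.X, MvPolynomial.monomial_mul, one_mul]

section SymPowBasis

variable {k : Type*} [Field k] {V : Type*} [AddCommGroup V] [Module k V]

/-- The symmetric product `v₁ ⋯ vₙ` in `Symⁿ V`. -/
noncomputable def symPowMk {n : ℕ} (v : Fin n → V) : SymPow k V n :=
  (symRel k V n).mkQ (PiTensorProduct.tprod k v)

theorem symPowMk_comp_perm {n : ℕ} (v : Fin n → V) (σ : Equiv.Perm (Fin n)) :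
    symPowMk (k := k) (v ∘ σ) = symPowMk v := by
  refine ((Submodule.Quotient.eq _).2 ?_).symm
  exact Submodule.subset_span ⟨σ, v, rfl⟩

theorem symPowMap_symPowMk {n : ℕ} (c : V →ₗ[k] V) (v : Fin n → V) :
    symPowMap k V n c (symPowMk v) = symPowMk fun i => c (v i) :=
  congrArg (symRel k V n).mkQ (PiTensorProduct.map_tprod _ _)

theorem symPowMk_smul {n : ℕ} (a : Fin n → k) (v : Fin n → V) :
    symPowMk (fun i => a i • v i) = (∏ i, a i) • symPowMk (k := k) v :=
  (congrArg (symRel k V n).mkQ (MultilinearMap.map_smul_univ _ a v)).trans (map_smul _ _ _)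

theorem symPowMk_basis_eq {ι : Type*} (b : Basis ι k V) {n : ℕ} {f g : Fin n → ι}
    (h : Multiset.map f Finset.univ.val = Multiset.map g Finset.univ.val) :
    symPowMk (k := k) (fun i => b (f i)) = symPowMk fun i => b (g i) := by
  obtain ⟨σ, rfl⟩ := exists_perm_of_map_univ_eq h
  exact symPowMk_comp_perm (fun i => b (g i)) σ

/-- The linear map from `Symⁿ V` to polynomials in the coordinates of a basis of `V`, sending
products of vectors to products of linear forms. -/
noncomputable def symPowToMvPolynomial {ι : Type*} (b : Basis ι k V) (n : ℕ) :
    SymPow k V n →ₗ[k] MvPolynomial ι k :=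
  (symRel k V n).liftQ
    (PiTensorProduct.lift
      ((MultilinearMap.mkPiAlgebra k (Fin n) (MvPolynomial ι k)).compLinearMap
        fun _ => b.constr k (MvPolynomial.X (R := k))))
    (by
      rw [symRel, Submodule.span_le]
      rintro x ⟨σ, v, rfl⟩
      simp only [SetLike.mem_coe, LinearMap.mem_ker, map_sub, PiTensorProduct.lift.tprod,
        MultilinearMap.compLinearMap_apply, MultilinearMap.mkPiAlgebra_apply, Function.comp_apply]
      rw [sub_eq_zero]
      exact (Equiv.prod_comp σ fun i => b.constr k (MvPolynomial.X (R := k)) (v i)).symm)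

theorem symPowToMvPolynomial_basis {ι : Type*} (b : Basis ι k V) {n : ℕ} (f : Fin n → ι) :
    symPowToMvPolynomial b n (symPowMk fun i => b (f i)) = ∏ i, MvPolynomial.X (f i) := by
  refine (Submodule.liftQ_apply _ _ _).trans ?_
  simp [PiTensorProduct.lift.tprod, Basis.constr_basis]

theorem exists_map_univ_eq_sym {ι : Type*} {n : ℕ} (s : Sym ι n) :
    ∃ f : Fin n → ι, Multiset.map f Finset.univ.val = (s : Multiset ι) := by
  obtain ⟨s, rfl⟩ := s
  obtain ⟨l, rfl⟩ := Quot.exists_rep s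
  exact ⟨l.get, (Fin.univ_val_map l.get).trans (congrArg _ (List.ofFn_get l))⟩

/-- An enumeration of the elements of a multiset of size `n`, with multiplicity. -/
noncomputable def symEnum {ι : Type*} {n : ℕ} (s : Sym ι n) : Fin n → ι :=
  (exists_map_univ_eq_sym s).choose

theorem map_symEnum {ι : Type*} {n : ℕ} (s : Sym ι n) :
    Multiset.map (symEnum s) Finset.univ.val = (s : Multiset ι) :=
  (exists_map_univ_eq_sym s).choose_spec

/-- The basis of monomials of `Symⁿ V` attached to a basis of `V`. -/
noncomputable def symPowBasis {ι : Type*} (b : Basis ι k V) (n : ℕ) :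
    Basis (Sym ι n) k (SymPow k V n) :=
  Basis.mk (v := fun s : Sym ι n => symPowMk (k := k) fun i => b (symEnum s i))
    (by
      classical
      apply LinearIndependent.of_comp (symPowToMvPolynomial b n)
      have h : (symPowToMvPolynomial b n ∘ fun s : Sym ι n => symPowMk fun i => b (symEnum s i)) =
          MvPolynomial.basisMonomials ι k ∘ fun s : Sym ι n => (s : Multiset ι).toFinsupp := by
        ext1 s
        rw [Function.comp_apply, symPowToMvPolynomial_basis, Function.comp_apply,
          MvPolynomial.coe_basisMonomials]
        refine Eq.trans ?_ (monomial_toFinsupp (s : Multiset ι)).symm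
        rw [← map_symEnum s, Multiset.map_map]
        rfl
      rw [h]
      exact (MvPolynomial.basisMonomials ι k).linearIndependent.comp _
        (Multiset.toFinsupp.injective.comp Sym.coe_injective))
    (by
      let q : (⨂[k]^n V) →ₗ[k] SymPow k V n := (symRel k V n).mkQ
      have hq : LinearMap.range q = ⊤ := Submodule.range_mkQ (symRel k V n)
      rw [← hq, LinearMap.range_eq_map,
        ← (Basis.piTensorProduct fun _ : Fin n => b).span_eq, Submodule.map_span, Submodule.span_le]
      rintro _ ⟨_, ⟨f, rfl⟩, rfl⟩
      refine Submodule.subset_span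
        ⟨⟨Multiset.map f Finset.univ.val, by simp⟩, ?_⟩
      rw [Basis.piTensorProduct_apply]
      exact symPowMk_basis_eq b (map_symEnum _))

theorem symPowBasis_apply {ι : Type*} (b : Basis ι k V) {n : ℕ} (s : Sym ι n) :
    symPowBasis b n s = symPowMk fun i => b (symEnum s i) :=
  Basis.mk_apply _ _ _

/-- The product of the signs of the elements of a multiset. -/
def symSign {ι : Type*} (ε : ι → ℤˣ) {n : ℕ} (s : Sym ι n) : ℤˣ :=
  (Multiset.map ε (s : Multiset ι)).prod

theorem symPowMap_symPowBasis {ι : Type*} (b : Basis ι k V) (c : V →ₗ[k] V) (ε : ι → ℤˣ)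
    (hb : ∀ i, c (b i) = ((ε i : ℤ) : k) • b i) {n : ℕ} (s : Sym ι n) :
    symPowMap k V n c (symPowBasis b n s) = ((symSign ε s : ℤ) : k) • symPowBasis b n s := by
  have h : symSign ε s = ∏ i, ε (symEnum s i) := by
    rw [symSign, ← map_symEnum s, Multiset.map_map]
    rfl
  rw [symPowBasis_apply, symPowMap_symPowMk, h]
  simp only [hb, symPowMk_smul]
  push_cast
  rfl

end SymPowBasis

/-- The kernel of a diagonal endomorphism has dimension the number of zero diagonal entries. -/
theorem finrank_ker_of_diagonal {k M ι : Type*} [Field k] [AddCommGroup M] [Module k M]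
    [Fintype ι] [DecidableEq k] (b : Basis ι k M) (f : M →ₗ[k] M) (w : ι → k)
    (h : ∀ i, f (b i) = w i • b i) :
    finrank k (LinearMap.ker f) = Fintype.card {i // w i = 0} := by
  classical
  have : FiniteDimensional k M := b.finiteDimensional_of_finite
  have hm : LinearMap.toMatrix b b f = Matrix.diagonal w := by
    ext i j
    rw [LinearMap.toMatrix_apply, h, map_smul, Basis.repr_self, Matrix.diagonal_apply]
    by_cases hij : i = j
    · subst hij; simp
    · simp [hij]
  have hr : finrank k (LinearMap.range f) = Fintype.card {i // w i ≠ 0} := by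
    rw [← Matrix.rank_diagonal, ← hm, Matrix.rank_eq_finrank_range_toLin _ b b,
      Matrix.toLin_toMatrix]
  have := f.finrank_range_add_finrank_ker
  rw [hr, finrank_eq_card_basis b] at this
  have : Fintype.card {i // w i ≠ 0} = _ := Fintype.card_subtype_compl fun i => w i = 0
  have := Fintype.card_subtype_le fun i => w i = 0
  omega

section Counting

variable {ι : Type*} [Fintype ι] [DecidableEq ι]

theorem card_sym_notMem (p : ι) (n : ℕ) :
    Fintype.card {s : Sym ι (n + 1) // p ∉ s} + (Fintype.card ι).multichoose n =
      (Fintype.card ι).multichoose (n + 1) := by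
  have e : Fintype.card {s : Sym ι (n + 1) // p ∈ s} = Fintype.card (Sym ι n) :=
    Fintype.card_congr
      { toFun := fun s => s.1.erase p s.2
        invFun := fun s => ⟨p ::ₛ s, Sym.mem_cons_self p s⟩
        left_inv := fun s => Subtype.ext (Sym.cons_erase s.2)
        right_inv := fun s => Sym.erase_cons_head s p _ }
  rw [← Sym.card_sym_eq_multichoose, ← Sym.card_sym_eq_multichoose, ← e,
    Fintype.card_subtype_compl]
  exact Nat.sub_add_cancel (Fintype.card_subtype_le _)

theorem card_symSign_le (ε : ι → ℤˣ) {p q : ι} (hpq : ε q = -ε p) (u : ℤˣ) (n : ℕ) :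
    Fintype.card {s : Sym ι (n + 1) // symSign ε s = u} ≤
      Fintype.card {s : Sym ι (n + 1) // symSign ε s = -u} +
        Fintype.card {s : Sym ι (n + 1) // p ∉ s} := by
  rw [← Fintype.card_sum]
  have hs (a : ι) (t : Sym ι n) : symSign ε (a ::ₛ t) = ε a * symSign ε t := by
    rw [symSign, Sym.coe_cons, Multiset.map_cons, Multiset.prod_cons, symSign]
  refine Fintype.card_le_of_injective
    (fun s => if h : p ∈ s.1 then .inl ⟨q ::ₛ s.1.erase p h, ?_⟩ else .inr ⟨s.1, h⟩) ?_
  · rw [hs, hpq, neg_mul, ← hs, Sym.cons_erase, s.2]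
  · rintro ⟨s, hs⟩ ⟨t, ht⟩ hst
    by_cases h : p ∈ s <;> by_cases h' : p ∈ t <;> simp [h, h'] at hst ⊢
    · rw [← Sym.cons_erase h, ← Sym.cons_erase h', hst]
    · exact hst

end Counting

theorem multichoose_mul (d n : ℕ) :
    (n + d + 1) * (d + 1).multichoose n = (d + 1) * (d + 2).multichoose n := by
  rw [Nat.multichoose_eq, Nat.multichoose_eq]
  have h := Nat.add_one_mul_choose_eq (n + d) d
  rw [show d + 1 + n - 1 = n + d by omega, show d + 2 + n - 1 = n + d + 1 by omega,
    Nat.choose_symm_add, h, mul_comm (d + 1), show n + d + 1 = n + (d + 1) by omega,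
    Nat.choose_symm_add]

theorem exists_eigenbasis_of_involution {k : Type*} [Field k] (hchar : (2 : k) ≠ 0)
    {V : Type*} [AddCommGroup V] [Module k V] [FiniteDimensional k V]
    (c : V →ₗ[k] V) (hc : c ∘ₗ c = LinearMap.id)
    (h1 : c ≠ LinearMap.id) (h2 : c ≠ -LinearMap.id) :
    ∃ (m n : ℕ) (b : Basis (Fin (m + 1) ⊕ Fin (n + 1)) k V),
      ∀ i, c (b i) = (((Sum.elim (fun _ => 1) (fun _ => -1) i : ℤˣ) : ℤ) : k) • b i := by
  have hcc (v : V) : c (c v) = v := LinearMap.congr_fun hc v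
  let A := LinearMap.ker (c - LinearMap.id)
  let B := LinearMap.ker (c + LinearMap.id)
  have hA {v : V} : v ∈ A ↔ c v = v := by simp [A, sub_eq_zero]
  have hB {v : V} : v ∈ B ↔ c v = -v := by simp [B, add_eq_zero_iff_eq_neg]
  have hAB : IsCompl A B := by
    constructor
    · rw [Submodule.disjoint_def]
      intro v ha hb
      have : (2 : k) • v = 0 := by
        rw [two_smul, add_eq_zero_iff_eq_neg, ← hB.1 hb, hA.1 ha]
      exact (smul_eq_zero.1 this).resolve_left hchar
    · rw [codisjoint_iff, Submodule.eq_top_iff']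
      intro v
      refine Submodule.mem_sup.2 ⟨(2 : k)⁻¹ • (v + c v), ?_, (2 : k)⁻¹ • (v - c v), ?_, ?_⟩
      · rw [hA, map_smul, map_add, hcc, add_comm]
      · rw [hB, map_smul, map_sub, hcc, ← smul_neg, neg_sub]
      · rw [← smul_add, add_add_sub_cancel, ← two_smul k, smul_smul, inv_mul_cancel₀ hchar,
          one_smul]
  have hA0 : 0 < finrank k A := by
    rw [Nat.pos_iff_ne_zero, Ne, Submodule.finrank_eq_zero]
    intro h
    rw [h] at hAB
    have hBt : B = ⊤ := eq_top_of_bot_isCompl hAB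
    exact h2 (LinearMap.ext fun v => hB.1 (hBt ▸ Submodule.mem_top))
  have hB0 : 0 < finrank k B := by
    rw [Nat.pos_iff_ne_zero, Ne, Submodule.finrank_eq_zero]
    intro h
    rw [h] at hAB
    have hAt : A = ⊤ := eq_top_of_isCompl_bot hAB
    exact h1 (LinearMap.ext fun v => hA.1 (hAt ▸ Submodule.mem_top))
  obtain ⟨m, hm⟩ := Nat.exists_eq_succ_of_ne_zero hA0.ne'
  obtain ⟨n, hn⟩ := Nat.exists_eq_succ_of_ne_zero hB0.ne'
  refine ⟨m, n, ((finBasisOfFinrankEq k A hm).prod (finBasisOfFinrankEq k B hn)).map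
    (Submodule.prodEquivOfIsCompl A B hAB), ?_⟩
  rintro (i | i)
  · simpa using hA.1 (finBasisOfFinrankEq k A hm i).2
  · simpa using hB.1 (finBasisOfFinrankEq k B hn i).2

/-- for a linear involution `c ≠ ±id` of a finite-dimensional vector space
over a field of characteristic `≠ 2`, the ratio of the dimension of the `+1`-eigenspace
of the induced involution on `Symⁿ V` to `dim Symⁿ V` tends to `1/2`. -/
theorem stmt_0 (k : Type*) [Field k] (hchar : (2 : k) ≠ 0)
    (V : Type*) [AddCommGroup V] [Module k V] [FiniteDimensional k V]
    (c : V →ₗ[k] V) (hc : c ∘ₗ c = LinearMap.id)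
    (h1 : c ≠ LinearMap.id) (h2 : c ≠ -LinearMap.id) :
    Filter.Tendsto
      (fun n : ℕ =>
        (Module.finrank k (LinearMap.ker (symPowMap k V n c - LinearMap.id)) : ℝ) /
          (Module.finrank k (SymPow k V n) : ℝ))
      Filter.atTop (nhds (1 / 2)) := by
  classical
  obtain ⟨m, l, b, hb⟩ := exists_eigenbasis_of_involution hchar c hc h1 h2
  set ε : Fin (m + 1) ⊕ Fin (l + 1) → ℤˣ := Sum.elim (fun _ => 1) (fun _ => -1)
  set N : ℕ → ℤˣ → ℕ := fun n u =>
    Fintype.card {s : Sym (Fin (m + 1) ⊕ Fin (l + 1)) n // symSign ε s = u}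
  have hι : Fintype.card (Fin (m + 1) ⊕ Fin (l + 1)) = m + l + 2 := by simp; omega
  have hdim (n : ℕ) : finrank k (SymPow k V n) = (m + l + 2).multichoose n := by
    rw [finrank_eq_card_basis (symPowBasis b n), Sym.card_sym_eq_multichoose, hι]
  have hker (n : ℕ) :
      finrank k (LinearMap.ker (symPowMap k V n c - LinearMap.id)) = N n 1 := by
    rw [finrank_ker_of_diagonal (symPowBasis b n) _ (fun s => ((symSign ε s : ℤ) : k) - 1)
      fun s => by rw [LinearMap.sub_apply, symPowMap_symPowBasis b c ε hb, LinearMap.id_apply,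
        sub_smul, one_smul]]
    refine Fintype.card_congr (Equiv.subtypeEquivRight fun s => ?_)
    rcases Int.units_eq_one_or (symSign ε s) with h | h
    · simp [h]
    · have : (-1 - 1 : k) ≠ 0 := by
        rw [← neg_add', one_add_one_eq_two]
        exact neg_ne_zero.2 hchar
      simpa [h] using this
  have htot (n : ℕ) : N n 1 + N n (-1) = (m + l + 2).multichoose n := by
    have hcompl : N n (-1) = Fintype.card {s : Sym (Fin (m + 1) ⊕ Fin (l + 1)) n //
        ¬ symSign ε s = 1} :=
      Fintype.card_congr (Equiv.subtypeEquivRight fun s => by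
        rw [← ne_eq, Int.units_ne_iff_eq_neg])
    rw [hcompl, Fintype.card_subtype_compl, ← hι, ← Sym.card_sym_eq_multichoose]
    exact Nat.add_sub_cancel' (Fintype.card_subtype_le _)
  have hpos (n : ℕ) : (0 : ℝ) < (m + l + 2).multichoose n := by
    rw [Nat.multichoose_eq]
    exact_mod_cast Nat.choose_pos (by omega)
  have hbound (n : ℕ) :
      |(N (n + 1) 1 : ℝ) / (m + l + 2).multichoose (n + 1) - 1 / 2| ≤
        (m + l + 1) / ((n : ℝ) + 1) := by
    have hcard (p : Fin (m + 1) ⊕ Fin (l + 1)) :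
        Fintype.card {s : Sym (Fin (m + 1) ⊕ Fin (l + 1)) (n + 1) // p ∉ s} =
          (m + l + 1).multichoose (n + 1) := by
      have h := card_sym_notMem p n
      rw [hι, Nat.multichoose_succ_succ (m + l + 1) n] at h
      exact Nat.add_right_cancel h
    have hle := card_symSign_le ε (p := .inl 0) (q := .inr 0) rfl 1 n
    have hge := card_symSign_le ε (p := .inl 0) (q := .inr 0) rfl (-1) n
    rw [neg_neg] at hge
    rw [hcard] at hle hge
    have hle' : (N (n + 1) 1 : ℝ) ≤ N (n + 1) (-1) + (m + l + 1).multichoose (n + 1) := by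
      exact_mod_cast hle
    have hge' : (N (n + 1) (-1) : ℝ) ≤ N (n + 1) 1 + (m + l + 1).multichoose (n + 1) := by
      exact_mod_cast hge
    have ht : (N (n + 1) 1 : ℝ) + N (n + 1) (-1) = (m + l + 2).multichoose (n + 1) := by
      exact_mod_cast htot (n + 1)
    have hmul : ((n : ℝ) + 1 + (m + l) + 1) * (m + l + 1).multichoose (n + 1) =
        (m + l + 1) * (m + l + 2).multichoose (n + 1) := by
      exact_mod_cast multichoose_mul (m + l) (n + 1)
    have hT := hpos (n + 1)
    have hZ : ((m + l + 1).multichoose (n + 1) : ℝ) / (m + l + 2).multichoose (n + 1) ≤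
        (m + l + 1) / ((n : ℝ) + 1) := by
      rw [div_le_div_iff₀ hT (by positivity), ← hmul, mul_comm]
      gcongr
      linarith [(m.cast_nonneg : (0 : ℝ) ≤ m), (l.cast_nonneg : (0 : ℝ) ≤ l)]
    refine le_trans ?_ hZ
    have hZ0 : (0 : ℝ) ≤ (m + l + 1).multichoose (n + 1) := Nat.cast_nonneg _
    rw [div_sub_div _ _ hT.ne' two_ne_zero, abs_le, ← neg_div,
      div_le_div_iff₀ hT (by positivity), div_le_div_iff₀ (by positivity) hT]
    constructor <;> nlinarith
  simp only [hdim, hker]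
  rw [← Filter.tendsto_add_atTop_iff_nat 1, tendsto_iff_norm_sub_tendsto_zero]
  refine squeeze_zero (fun _ => norm_nonneg _) hbound ?_
  have h := (tendsto_one_div_add_atTop_nhds_zero_nat (𝕜 := ℝ)).const_mul ((m : ℝ) + l + 1)
  simpa [mul_one_div, div_eq_mul_inv] using h
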